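/- (IAC probability of no majority candidate, partial ballots.) The IAC probability, over partial-ballot profiles with total 1, of the event that no candidate has a strict majority of first-place votes — i.e., ¬(X' > Y' + Z'), ¬(Y' > X' + Z'), and ¬(Z' > X' + Y') — equals 145/256. Equivalently, the 8-dimensional Lebesgue measure of the set of points of T' on which this event holds equals (145/256)·(1/8!). -/

import Mathlib

/-- A three-candidate partial-ballot profile: numbers of ballots with rankings
A≻B≻C, A≻C≻B, A only, B≻A≻C, B≻C≻A, B only, C≻A≻B, C≻B≻A, C only, respectively. -/
structure PProfile where
  x1 : ℝ
  x2 : ℝ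
  x3 : ℝ
  y1 : ℝ
  y2 : ℝ
  y3 : ℝ
  z1 : ℝ
  z2 : ℝ
  z3 : ℝ

namespace PProfile

def nonneg (q : PProfile) : Prop :=
  0 ≤ q.x1 ∧ 0 ≤ q.x2 ∧ 0 ≤ q.x3 ∧ 0 ≤ q.y1 ∧ 0 ≤ q.y2 ∧ 0 ≤ q.y3 ∧
    0 ≤ q.z1 ∧ 0 ≤ q.z2 ∧ 0 ≤ q.z3

instance : Add PProfile :=
  ⟨fun p q => ⟨p.x1 + q.x1, p.x2 + q.x2, p.x3 + q.x3, p.y1 + q.y1, p.y2 + q.y2,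
    p.y3 + q.y3, p.z1 + q.z1, p.z2 + q.z2, p.z3 + q.z3⟩⟩

/-- First-place total of candidate A. -/
def X (q : PProfile) : ℝ := q.x1 + q.x2 + q.x3
/-- First-place total of candidate B. -/
def Y (q : PProfile) : ℝ := q.y1 + q.y2 + q.y3
/-- First-place total of candidate C. -/
def Z (q : PProfile) : ℝ := q.z1 + q.z2 + q.z3
/-- Total vote. -/
def V (q : PProfile) : ℝ := q.X + q.Y + q.Z

end PProfile

inductive Cand | A | B | C

/-- Candidate `W` wins strictly under IRV (with exhausted ballots removed) in `q`. -/
def wins : Cand → PProfile → Prop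
  | Cand.A, q => q.X > q.Y + q.Z ∨
      (q.Z < q.X ∧ q.Z < q.Y ∧ q.X + q.z1 > q.Y + q.z2) ∨
      (q.Y < q.X ∧ q.Y < q.Z ∧ q.X + q.y1 > q.Z + q.y2)
  | Cand.B, q => q.Y > q.X + q.Z ∨
      (q.Z < q.Y ∧ q.Z < q.X ∧ q.Y + q.z2 > q.X + q.z1) ∨
      (q.X < q.Y ∧ q.X < q.Z ∧ q.Y + q.x1 > q.Z + q.x2)
  | Cand.C, q => q.Z > q.X + q.Y ∨
      (q.X < q.Z ∧ q.X < q.Y ∧ q.Z + q.x2 > q.Y + q.x1) ∨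
      (q.Y < q.Z ∧ q.Y < q.X ∧ q.Z + q.y2 > q.X + q.y1)

/-- Profile `q` demonstrates a reinforcement paradox for candidate `W`. -/
def paradox (W : Cand) (q : PProfile) : Prop :=
  ∃ q1 q2 : PProfile, q1.nonneg ∧ q2.nonneg ∧ q1 + q2 = q ∧
    wins W q1 ∧ wins W q2 ∧ ¬ wins W q

/-- The simplex of partial-ballot profiles with total 1, parameterized by the
first eight coordinates (X1, X2, X3, Y1, Y2, Y3, Z1, Z2). -/
def T' : Set (Fin 8 → ℝ) :=
  {v | (∀ i, 0 ≤ v i) ∧ v 0 + v 1 + v 2 + v 3 + v 4 + v 5 + v 6 + v 7 ≤ 1}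

/-- The partial-ballot profile with total 1 associated to a point of `T'`, with
`Z3 = 1` minus the sum of the eight coordinates. -/
noncomputable def pprofOf (v : Fin 8 → ℝ) : PProfile :=
  ⟨v 0, v 1, v 2, v 3, v 4, v 5, v 6, v 7,
    1 - (v 0 + v 1 + v 2 + v 3 + v 4 + v 5 + v 6 + v 7)⟩

open MeasureTheory Set in
/-- Lower-level computation: the lower integral of a continuous function over `Ioc`. -/
theorem aux_lint (a b : ℝ) (hab : a ≤ b) (g : ℝ → ℝ) (hg : Continuous g)
    (h0 : ∀ x ∈ Ioc a b, 0 ≤ g x) :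
    ∫⁻ x in Ioc a b, ENNReal.ofReal (g x) = ENNReal.ofReal (∫ x in a..b, g x) := by
  rw [intervalIntegral.integral_of_le hab, ofReal_integral_eq_lintegral_ofReal]
  · exact (intervalIntegrable_iff_integrableOn_Ioc_of_le hab).1 (hg.intervalIntegrable a b)
  · filter_upwards [ae_restrict_mem measurableSet_Ioc] with x hx using h0 x hx

/-- The density of the sum of `n+1` nonnegative coordinates under Lebesgue measure. -/
noncomputable def dens (n : ℕ) (t : ℝ) : ENNReal :=
  if 0 ≤ t then ENNReal.ofReal (t ^ n / n.factorial) else 0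

theorem dens_meas (n : ℕ) : Measurable (dens n) := by
  unfold dens
  exact Measurable.ite measurableSet_Ici (by fun_prop) measurable_const

theorem dens_zero (t : ℝ) : dens 0 t = if 0 ≤ t then 1 else 0 := by
  simp [dens]

open MeasureTheory Set in
theorem dens_conv (n : ℕ) (s : ℝ) : ∫⁻ x, dens n x * dens 0 (s - x) = dens (n + 1) s := by
  have h : ∀ x, dens n x * dens 0 (s - x)
      = (Icc 0 s).indicator (fun x => ENNReal.ofReal (x ^ n / n.factorial)) x := by
    intro x
    rw [dens_zero]
    by_cases h1 : 0 ≤ x <;> by_cases h2 : x ≤ s <;> simp [dens, h1, h2, indicator]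
  simp_rw [h]
  rw [lintegral_indicator measurableSet_Icc]
  by_cases hs : 0 ≤ s
  · rw [← Measure.restrict_congr_set (Ioc_ae_eq_Icc (a := (0:ℝ)) (b := s)),
      aux_lint 0 s hs _ (by fun_prop) (fun x hx => by have := hx.1.le; positivity)]
    simp only [dens, hs, if_true]
    congr 1
    rw [intervalIntegral.integral_div, integral_pow, Nat.factorial_succ]
    push_cast
    field_simp
    simp
  · rw [Icc_eq_empty (by simpa using hs)]
    simp [dens, hs]

open MeasureTheory Set in
theorem lint_cons (n : ℕ) (F : (Fin (n + 1) → ℝ) → ENNReal) (hF : Measurable F) :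
    ∫⁻ v, F v = ∫⁻ x : ℝ, ∫⁻ y : Fin n → ℝ, F (Fin.cons x y) := by
  have hp := (volume_preserving_piFinSuccAbove (fun _ : Fin (n + 1) => ℝ) 0).symm
  have hm := hF.comp hp.measurable
  rw [← hp.lintegral_comp hF, Measure.volume_eq_prod]
  refine (lintegral_prod _ hm.aemeasurable).trans ?_
  refine lintegral_congr fun x => lintegral_congr fun y => ?_
  refine congrArg F ?_
  funext i
  refine Fin.cases ?_ (fun j => ?_) i <;> rfl

open MeasureTheory Set in
theorem dens_sum (n : ℕ) : ∀ f : ℝ → ENNReal, Measurable f →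
    ∫⁻ v : Fin (n + 1) → ℝ, (∏ i, dens 0 (v i)) * f (∑ i, v i) = ∫⁻ t, dens n t * f t := by
  induction n with
  | zero =>
    intro f hf
    rw [← (volume_preserving_funUnique (Fin 1) ℝ).lintegral_comp
      (f := fun t => dens 0 t * f t) ((dens_meas 0).mul hf)]
    simp
    rfl
  | succ n ih =>
    intro f hf
    have hd := dens_meas
    rw [lint_cons _ _ (by fun_prop)]
    have h1 : ∀ x : ℝ, (∫⁻ y : Fin (n + 1) → ℝ,
        (∏ i, dens 0 ((Fin.cons x y : Fin (n + 2) → ℝ) i)) *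
          f (∑ i, (Fin.cons x y : Fin (n + 2) → ℝ) i))
        = ∫⁻ t, dens 0 x * (dens n (t - x) * f t) := by
      intro x
      have h2 : ∀ y : Fin (n + 1) → ℝ, (∏ i, dens 0 ((Fin.cons x y : Fin (n + 2) → ℝ) i)) *
          f (∑ i, (Fin.cons x y : Fin (n + 2) → ℝ) i)
          = dens 0 x * ((∏ i, dens 0 (y i)) * f (x + ∑ i, y i)) := by
        intro y
        rw [Fin.prod_univ_succ, Fin.sum_univ_succ, mul_assoc]
        simp only [Fin.cons_zero, Fin.cons_succ]
      simp_rw [h2]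
      rw [lintegral_const_mul _ (by fun_prop), lintegral_const_mul _ (by fun_prop),
        ih (fun t => f (x + t)) (by fun_prop),
        ← lintegral_sub_right_eq_self (fun t => dens n t * f (x + t)) x]
      simp
    simp_rw [h1]
    rw [lintegral_lintegral_swap (by unfold Function.uncurry; fun_prop)]
    refine lintegral_congr fun t => ?_
    rw [← dens_conv, ← lintegral_mul_const _ (by fun_prop),
      ← lintegral_sub_left_eq_self (fun x => dens n x * dens 0 (t - x) * f t) t]
    refine lintegral_congr fun x => ?_
    simp only [sub_sub_cancel]
    ring

open MeasureTheory Set in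
theorem dens_split (k l m : ℕ) (e : Fin (k + 1) ⊕ Fin (l + 1) ≃ Fin m) (S : Set ℝ)
    (hS : MeasurableSet S) :
    volume {v : Fin m → ℝ | (∀ i, 0 ≤ v i) ∧ ∑ i, v i ≤ 1 ∧ ∑ i, v (e (Sum.inl i)) ∈ S}
      = ∫⁻ a, dens k a * S.indicator 1 a * dens (l + 1) (1 - a) := by
  have hd := dens_meas
  have hi : Measurable (S.indicator (1 : ℝ → ENNReal)) := measurable_one.indicator hS
  have hm : MeasurableSet
      {v : Fin m → ℝ | (∀ i, 0 ≤ v i) ∧ ∑ i, v i ≤ 1 ∧ ∑ i, v (e (Sum.inl i)) ∈ S} := by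
    have m1 : MeasurableSet {v : Fin m → ℝ | ∀ i, 0 ≤ v i} := by
      rw [setOf_forall]
      exact MeasurableSet.iInter fun i => measurableSet_le measurable_const (measurable_pi_apply i)
    have m2 : MeasurableSet {v : Fin m → ℝ | ∑ i, v i ≤ 1} :=
      measurableSet_le (by fun_prop) measurable_const
    have m3 : MeasurableSet {v : Fin m → ℝ | ∑ i, v (e (Sum.inl i)) ∈ S} :=
      (show Measurable fun v : Fin m → ℝ => ∑ i, v (e (Sum.inl i)) by fun_prop) hS
    exact m1.inter (m2.inter m3)
  rw [← lintegral_indicator_one hm]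
  have h1 : ∀ v : Fin m → ℝ,
      {v : Fin m → ℝ | (∀ i, 0 ≤ v i) ∧ ∑ i, v i ≤ 1 ∧ ∑ i, v (e (Sum.inl i)) ∈ S}.indicator
        (1 : (Fin m → ℝ) → ENNReal) v
      = ((∏ i, dens 0 (v (e (Sum.inl i)))) * S.indicator 1 (∑ i, v (e (Sum.inl i)))) *
        ((∏ i, dens 0 (v (e (Sum.inr i)))) *
          dens 0 (1 - (∑ i, v (e (Sum.inl i))) - ∑ i, v (e (Sum.inr i)))) := by
    intro v
    have hp : (∏ i, dens 0 (v (e (Sum.inl i)))) * (∏ i, dens 0 (v (e (Sum.inr i))))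
        = if ∀ i, 0 ≤ v i then 1 else 0 := by
      rw [← Fintype.prod_sum_type (fun j => dens 0 (v (e j))),
        e.prod_comp (fun j => dens 0 (v j))]
      simp_rw [dens_zero]
      rw [Finset.prod_ite_zero]
      simp
    have hs : ∑ i, v i = (∑ i, v (e (Sum.inl i))) + ∑ i, v (e (Sum.inr i)) := by
      rw [← Fintype.sum_sum_type (fun j => v (e j)), e.sum_comp]
    have hz : dens 0 (1 - (∑ i, v (e (Sum.inl i))) - ∑ i, v (e (Sum.inr i)))
        = if ∑ i, v i ≤ 1 then 1 else 0 := by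
      rw [dens_zero, sub_sub, ← hs]; simp
    rw [mul_mul_mul_comm, hp, hz]
    by_cases c1 : ∀ i, 0 ≤ v i <;> by_cases c2 : ∑ i, v i ≤ 1 <;>
      by_cases c3 : ∑ i, v (e (Sum.inl i)) ∈ S <;> simp [indicator, c1, c2, c3]
  simp_rw [h1]
  rw [← (volume_measurePreserving_piCongrLeft (fun _ => ℝ) e).lintegral_comp (by fun_prop)]
  have h2 : ∀ (w : Fin (k + 1) ⊕ Fin (l + 1) → ℝ) (j),
      (MeasurableEquiv.piCongrLeft (fun _ => ℝ) e) w (e j) = w j := fun w j =>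
    Equiv.piCongrLeft_apply_apply (fun _ => ℝ) e w j
  simp_rw [h2]
  rw [← (volume_measurePreserving_sumPiEquivProdPi_symm
    (fun _ : Fin (k + 1) ⊕ Fin (l + 1) => ℝ)).lintegral_comp (by fun_prop)]
  have h3 : ∀ (p : (Fin (k + 1) → ℝ) × (Fin (l + 1) → ℝ)) (i),
      (MeasurableEquiv.sumPiEquivProdPi (fun _ : Fin (k + 1) ⊕ Fin (l + 1) => ℝ)).symm p
        (Sum.inl i) = p.1 i := fun _ _ => rfl
  have h4 : ∀ (p : (Fin (k + 1) → ℝ) × (Fin (l + 1) → ℝ)) (i),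
      (MeasurableEquiv.sumPiEquivProdPi (fun _ : Fin (k + 1) ⊕ Fin (l + 1) => ℝ)).symm p
        (Sum.inr i) = p.2 i := fun _ _ => rfl
  simp_rw [h3, h4]
  rw [Measure.volume_eq_prod, lintegral_prod _ (by fun_prop)]
  have h5 : ∀ x : Fin (k + 1) → ℝ, ∫⁻ y : Fin (l + 1) → ℝ,
      ((∏ i, dens 0 (x i)) * S.indicator 1 (∑ i, x i)) *
        ((∏ i, dens 0 (y i)) * dens 0 (1 - (∑ i, x i) - ∑ i, y i))
      = (∏ i, dens 0 (x i)) * (S.indicator 1 (∑ i, x i) * dens (l + 1) (1 - ∑ i, x i)) := by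
    intro x
    rw [lintegral_const_mul _ (by fun_prop),
      dens_sum l (fun t => dens 0 (1 - (∑ i, x i) - t)) (by fun_prop), dens_conv, mul_assoc]
  simp_rw [h5]
  rw [dens_sum k (fun t => S.indicator 1 t * dens (l + 1) (1 - t)) (by fun_prop)]
  simp_rw [mul_assoc]

open MeasureTheory Set in
theorem val_maj : ∫⁻ a, dens 2 a * (Ioi (1 / 2 : ℝ)).indicator 1 a * dens (4 + 1) (1 - a)
    = ENNReal.ofReal (37 / 256 / 40320) := by
  have h : ∀ a, dens 2 a * (Ioi (1 / 2 : ℝ)).indicator 1 a * dens (4 + 1) (1 - a)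
      = (Ioc (1 / 2 : ℝ) 1).indicator (fun a => ENNReal.ofReal (a ^ 2 * (1 - a) ^ 5 / 240)) a := by
    intro a
    by_cases h1 : 1 / 2 < a
    · by_cases h2 : a ≤ 1
      · have h3 : 0 ≤ a := by linarith
        have h4 : 0 ≤ 1 - a := by linarith
        rw [indicator_of_mem (show a ∈ Ioi (1 / 2 : ℝ) from h1),
          indicator_of_mem (show a ∈ Ioc (1 / 2 : ℝ) 1 from ⟨h1, h2⟩)]
        simp only [dens, h3, h4, if_true, Pi.one_apply, mul_one]
        rw [← ENNReal.ofReal_mul (by positivity)]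
        congr 1
        norm_num [Nat.factorial]
        ring
      · have h4 : ¬ 0 ≤ 1 - a := by linarith
        rw [indicator_of_notMem (show a ∉ Ioc (1 / 2 : ℝ) 1 from fun h => h2 h.2)]
        simp only [dens, h4, if_false, mul_zero]
    · rw [indicator_of_notMem (show a ∉ Ioi (1 / 2 : ℝ) from h1),
        indicator_of_notMem (show a ∉ Ioc (1 / 2 : ℝ) 1 from fun h => h1 h.1)]
      simp
  simp_rw [h]
  rw [lintegral_indicator measurableSet_Ioc, aux_lint _ _ (by norm_num) _ (by fun_prop)
    (fun x hx => by have : 0 ≤ 1 - x := by linarith [hx.2]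
                    positivity)]
  congr 1
  have : ∀ x ∈ uIcc (1 / 2 : ℝ) 1, HasDerivAt (fun x : ℝ =>
      (x ^ 3 / 3 - 5 * x ^ 4 / 4 + 10 * x ^ 5 / 5 - 10 * x ^ 6 / 6 + 5 * x ^ 7 / 7 - x ^ 8 / 8)
        / 240) (x ^ 2 * (1 - x) ^ 5 / 240) x := by
    intro x _
    have hh := fun n : ℕ => hasDerivAt_pow n x
    have H := ((((((hh 3).div_const 3).sub (((hh 4).const_mul 5).div_const 4)).add
      (((hh 5).const_mul 10).div_const 5)).sub (((hh 6).const_mul 10).div_const 6)).add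
      (((hh 7).const_mul 5).div_const 7)).sub ((hh 8).div_const 8) |>.div_const 240
    refine H.congr_deriv ?_
    norm_num
    ring
  rw [intervalIntegral.integral_eq_sub_of_hasDerivAt this
    (Continuous.intervalIntegrable (by fun_prop) _ _)]
  norm_num

open MeasureTheory Set in
theorem val_maj' : ∫⁻ a, dens 5 a * (Iio (1 / 2 : ℝ)).indicator 1 a * dens (1 + 1) (1 - a)
    = ENNReal.ofReal (37 / 256 / 40320) := by
  rw [← val_maj, ← lintegral_sub_left_eq_self _ 1]
  refine lintegral_congr fun a => ?_
  have : (Iio (1 / 2 : ℝ)).indicator (1 : ℝ → ENNReal) (1 - a) = (Ioi (1 / 2 : ℝ)).indicator 1 a := by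
    simp only [indicator, mem_Iio, mem_Ioi]
    congr 1
    exact propext ⟨fun h => by linarith, fun h => by linarith⟩
  rw [this, sub_sub_cancel]
  ring

/-- Swap of the first two blocks of three coordinates. -/
def swapEquiv : Fin (2 + 1) ⊕ Fin (4 + 1) ≃ Fin 8 where
  toFun := Sum.elim ![3, 4, 5] ![0, 1, 2, 6, 7]
  invFun := ![.inr 0, .inr 1, .inr 2, .inl 0, .inl 1, .inl 2, .inr 3, .inr 4]
  left_inv := by decide
  right_inv := by decide

/-- First block of three coordinates. -/
def fstEquiv : Fin (2 + 1) ⊕ Fin (4 + 1) ≃ Fin 8 where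
  toFun := Sum.elim ![0, 1, 2] ![3, 4, 5, 6, 7]
  invFun := ![.inl 0, .inl 1, .inl 2, .inr 0, .inr 1, .inr 2, .inr 3, .inr 4]
  left_inv := by decide
  right_inv := by decide

/-- First block of six coordinates. -/
def sixEquiv : Fin (5 + 1) ⊕ Fin (1 + 1) ≃ Fin 8 where
  toFun := Sum.elim ![0, 1, 2, 3, 4, 5] ![6, 7]
  invFun := ![.inl 0, .inl 1, .inl 2, .inl 3, .inl 4, .inl 5, .inr 0, .inr 1]
  left_inv := by decide
  right_inv := by decide

open MeasureTheory Set in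
theorem meas_T : MeasurableSet T' := by
  have m1 : MeasurableSet {v : Fin 8 → ℝ | ∀ i, 0 ≤ v i} := by
    rw [setOf_forall]
    exact MeasurableSet.iInter fun i => measurableSet_le measurable_const (measurable_pi_apply i)
  have m2 : MeasurableSet {v : Fin 8 → ℝ | v 0 + v 1 + v 2 + v 3 + v 4 + v 5 + v 6 + v 7 ≤ 1} :=
    measurableSet_le (by fun_prop) measurable_const
  exact m1.inter m2

open MeasureTheory Set in
theorem vol_T : volume T' = ENNReal.ofReal (1 / 40320) := by
  have hd := dens_meas
  have hm := meas_T
  rw [← lintegral_indicator_one hm]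
  have h : ∀ v : Fin 8 → ℝ, T'.indicator (1 : (Fin 8 → ℝ) → ENNReal) v
      = (∏ i, dens 0 (v i)) * dens 0 (1 - ∑ i, v i) := by
    intro v
    simp_rw [dens_zero]
    rw [Finset.prod_ite_zero]
    have hs : v 0 + v 1 + v 2 + v 3 + v 4 + v 5 + v 6 + v 7 = ∑ i, v i := by
      simp [Fin.sum_univ_eight]
    by_cases c1 : ∀ i, 0 ≤ v i <;> by_cases c2 : ∑ i, v i ≤ 1 <;>
      simp [T', indicator, c1, c2, hs]
  simp_rw [h]
  rw [dens_sum 7 (fun t => dens 0 (1 - t)) (by fun_prop), dens_conv]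
  norm_num [dens, Nat.factorial]

open MeasureTheory Set in
theorem stmt19 :
    MeasureTheory.volume
      {v ∈ T' | ¬ ((pprofOf v).X > (pprofOf v).Y + (pprofOf v).Z) ∧
                ¬ ((pprofOf v).Y > (pprofOf v).X + (pprofOf v).Z) ∧
                ¬ ((pprofOf v).Z > (pprofOf v).X + (pprofOf v).Y)} =
      (145 / 256) * (1 / 40320 : ENNReal) := by
  have hA := dens_split 2 4 8 fstEquiv _ (measurableSet_Ioi (a := (1 / 2 : ℝ)))
  have hB := dens_split 2 4 8 swapEquiv _ (measurableSet_Ioi (a := (1 / 2 : ℝ)))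
  have hC := dens_split 5 1 8 sixEquiv _ (measurableSet_Iio (a := (1 / 2 : ℝ)))
  rw [val_maj] at hA hB
  rw [val_maj'] at hC
  have eA : {v : Fin 8 → ℝ | (∀ i, 0 ≤ v i) ∧ ∑ i, v i ≤ 1 ∧
      ∑ i, v (fstEquiv (Sum.inl i)) ∈ Ioi (1 / 2 : ℝ)} = T' ∩ {v | 1 / 2 < v 0 + v 1 + v 2} := by
    ext v
    simp [T', fstEquiv, Fin.sum_univ_eight, Fin.sum_univ_succ, and_assoc, add_assoc]
  have eB : {v : Fin 8 → ℝ | (∀ i, 0 ≤ v i) ∧ ∑ i, v i ≤ 1 ∧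
      ∑ i, v (swapEquiv (Sum.inl i)) ∈ Ioi (1 / 2 : ℝ)} = T' ∩ {v | 1 / 2 < v 3 + v 4 + v 5} := by
    ext v
    simp [T', swapEquiv, Fin.sum_univ_eight, Fin.sum_univ_succ, and_assoc, add_assoc]
  have eC : {v : Fin 8 → ℝ | (∀ i, 0 ≤ v i) ∧ ∑ i, v i ≤ 1 ∧
      ∑ i, v (sixEquiv (Sum.inl i)) ∈ Iio (1 / 2 : ℝ)}
      = T' ∩ {v | v 0 + v 1 + v 2 + v 3 + v 4 + v 5 < 1 / 2} := by
    ext v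
    simp [T', sixEquiv, Fin.sum_univ_eight, Fin.sum_univ_six, and_assoc, add_assoc]
  rw [eA] at hA
  rw [eB] at hB
  rw [eC] at hC
  have mT := meas_T
  have mA : MeasurableSet (T' ∩ {v | 1 / 2 < v 0 + v 1 + v 2}) :=
    mT.inter (measurableSet_lt measurable_const (by fun_prop))
  have mB : MeasurableSet (T' ∩ {v | 1 / 2 < v 3 + v 4 + v 5}) :=
    mT.inter (measurableSet_lt measurable_const (by fun_prop))
  have mC : MeasurableSet (T' ∩ {v | v 0 + v 1 + v 2 + v 3 + v 4 + v 5 < 1 / 2}) :=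
    mT.inter (measurableSet_lt (by fun_prop) measurable_const)
  have eE : {v ∈ T' | ¬ ((pprofOf v).X > (pprofOf v).Y + (pprofOf v).Z) ∧
                ¬ ((pprofOf v).Y > (pprofOf v).X + (pprofOf v).Z) ∧
                ¬ ((pprofOf v).Z > (pprofOf v).X + (pprofOf v).Y)}
      = T' \ ((T' ∩ {v | 1 / 2 < v 0 + v 1 + v 2}) ∪ ((T' ∩ {v | 1 / 2 < v 3 + v 4 + v 5}) ∪
        (T' ∩ {v | v 0 + v 1 + v 2 + v 3 + v 4 + v 5 < 1 / 2}))) := by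
    ext v
    simp only [mem_setOf_eq, mem_diff, mem_union, mem_inter_iff, pprofOf, PProfile.X, PProfile.Y,
      PProfile.Z, gt_iff_lt, not_or, not_and, not_lt]
    constructor
    · rintro ⟨h, h1, h2, h3⟩
      exact ⟨h, fun _ => by linarith, fun _ => by linarith, fun _ => by linarith⟩
    · rintro ⟨h, h1, h2, h3⟩
      have := h1 h
      have := h2 h
      have := h3 h
      exact ⟨h, by linarith, by linarith, by linarith⟩
  have dBC : Disjoint (T' ∩ {v | 1 / 2 < v 3 + v 4 + v 5})
      (T' ∩ {v | v 0 + v 1 + v 2 + v 3 + v 4 + v 5 < 1 / 2}) := by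
    rw [Set.disjoint_left]
    rintro v ⟨⟨h0, h1⟩, h2⟩ ⟨_, h3⟩
    simp only [mem_setOf_eq] at h2 h3
    linarith [h0 0, h0 1, h0 2]
  have dA : Disjoint (T' ∩ {v | 1 / 2 < v 0 + v 1 + v 2}) ((T' ∩ {v | 1 / 2 < v 3 + v 4 + v 5}) ∪
      (T' ∩ {v | v 0 + v 1 + v 2 + v 3 + v 4 + v 5 < 1 / 2})) := by
    rw [Set.disjoint_left]
    rintro v ⟨⟨h0, h1⟩, h2⟩ (⟨_, h3⟩ | ⟨_, h3⟩)
    · simp only [mem_setOf_eq] at h2 h3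
      linarith [h0 6, h0 7]
    · simp only [mem_setOf_eq] at h2 h3
      linarith [h0 3, h0 4, h0 5]
  have hU := measure_union (μ := volume) dA (mB.union mC)
  rw [measure_union dBC mC, hA, hB, hC, ← ENNReal.ofReal_add (by norm_num) (by norm_num),
    ← ENNReal.ofReal_add (by norm_num) (by norm_num)] at hU
  rw [eE, measure_diff (union_subset inter_subset_left
    (union_subset inter_subset_left inter_subset_left))
    (mA.union (mB.union mC)).nullMeasurableSet (by rw [hU]; exact ENNReal.ofReal_ne_top),
    vol_T, hU, ← ENNReal.ofReal_sub _ (by norm_num)]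
  have : (145 / 256) * (1 / 40320 : ENNReal) = ENNReal.ofReal ((145 / 256) * (1 / 40320)) := by
    rw [ENNReal.ofReal_mul (by norm_num), ENNReal.ofReal_div_of_pos (by norm_num),
      ENNReal.ofReal_div_of_pos (by norm_num)]
    norm_num
  rw [this]
  norm_num
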